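/- Soundness of the labelled sequent calculus for CPL₀: if a labelled sequent ⊢ L is derivable in the proof system for CPL₀, then it is valid; that is, if L = b ↣ A then ⟦b⟧ ⊆ ⟦A⟧, and if L = b ↢ A then ⟦A⟧ ⊆ ⟦b⟧. -/

import Mathlib

open MeasureTheory

/-- The Cantor space `2^ω` of infinite binary sequences. -/
abbrev Cantor : Type := ℕ → Bool

/-- Rational numbers in the unit interval `[0,1]`. -/
abbrev I01 : Type := (Set.Icc (0 : ℚ) 1)

/-- The value of a rational `q ∈ [0,1]` as an extended nonnegative real. -/
noncomputable def qq (q : I01) : ENNReal := ENNReal.ofReal (q.1 : ℝ)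

/-- `μ` is the fair-coin Bernoulli (uniform) product measure on the Cantor space:
it is a probability measure giving each cylinder fixing the values on a finite set `s`
of coordinates the measure `2^{-|s|}`. -/
def IsCantorMeasure (μ : Measure Cantor) : Prop :=
  IsProbabilityMeasure μ ∧
    ∀ (s : Finset ℕ) (v : ℕ → Bool),
      μ {f : Cantor | ∀ i ∈ s, f i = v i} = (2 : ENNReal)⁻¹ ^ s.card

/-- Boolean formulas `b ::= xᵢ | ⊤ | ⊥ | ¬b | b ∧ c | b ∨ c`. -/
inductive BF : Type where
  | var : ℕ → BF
  | tt : BF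
  | ff : BF
  | neg : BF → BF
  | conj : BF → BF → BF
  | disj : BF → BF → BF
deriving DecidableEq

/-- The interpretation `⟦b⟧ ⊆ 2^ω` of a Boolean formula. -/
def BF.sem : BF → Set Cantor
  | .var i => {f | f i = true}
  | .tt => Set.univ
  | .ff => ∅
  | .neg b => (BF.sem b)ᶜ
  | .conj b c => BF.sem b ∩ BF.sem c
  | .disj b c => BF.sem b ∪ BF.sem c

/-- Formulas of univariate counting propositional logic CPL₀:
`A ::= i | ¬A | A ∧ B | A ∨ B | C^q A | D^q A` with `q` a rational in `[0,1]`. -/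
inductive CPL0 : Type where
  | atom : ℕ → CPL0
  | neg : CPL0 → CPL0
  | conj : CPL0 → CPL0 → CPL0
  | disj : CPL0 → CPL0 → CPL0
  | cnt : I01 → CPL0 → CPL0
  | dnt : I01 → CPL0 → CPL0
deriving DecidableEq

open scoped Classical in
/-- The interpretation `⟦A⟧ ⊆ 2^ω` of a CPL₀ formula (relative to the measure `μ`). -/
noncomputable def CPL0.sem (μ : Measure Cantor) : CPL0 → Set Cantor
  | .atom i => {f | f i = true}
  | .neg A => (CPL0.sem μ A)ᶜ
  | .conj A B => CPL0.sem μ A ∩ CPL0.sem μ B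
  | .disj A B => CPL0.sem μ A ∪ CPL0.sem μ B
  | .cnt q A => if qq q ≤ μ (CPL0.sem μ A) then Set.univ else ∅
  | .dnt q A => if μ (CPL0.sem μ A) < qq q then Set.univ else ∅

/-- Labelled formulas: `b ↣ A` (`fwd`) and `b ↢ A` (`bwd`). -/
inductive LF : Type where
  | fwd : BF → CPL0 → LF
  | bwd : BF → CPL0 → LF
deriving DecidableEq

/-- Validity of a labelled formula: `b ↣ A` is valid when `⟦b⟧ ⊆ ⟦A⟧`,
and `b ↢ A` is valid when `⟦A⟧ ⊆ ⟦b⟧`. -/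
def LF.valid (μ : Measure Cantor) : LF → Prop
  | .fwd b A => BF.sem b ⊆ CPL0.sem μ A
  | .bwd b A => CPL0.sem μ A ⊆ BF.sem b

/-- The labelled, one-sided, single-succedent sequent calculus for CPL₀:
`Der μ L` means that the sequent `⊢ L` is derivable. -/
inductive Der (μ : Measure Cantor) : LF → Prop where
  | ax1 {b : BF} {n : ℕ} :
      BF.sem b ⊆ BF.sem (.var n) → Der μ (.fwd b (.atom n))
  | ax2 {b : BF} {n : ℕ} :
      BF.sem (.var n) ⊆ BF.sem b → Der μ (.bwd b (.atom n))
  | runion {b c d : BF} {A : CPL0} :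
      Der μ (.fwd c A) → Der μ (.fwd d A) →
      BF.sem b ⊆ BF.sem (.disj c d) → Der μ (.fwd b A)
  | rinter {b c d : BF} {A : CPL0} :
      Der μ (.bwd c A) → Der μ (.bwd d A) →
      BF.sem (.conj c d) ⊆ BF.sem b → Der μ (.bwd b A)
  | negF {b c : BF} {A : CPL0} :
      Der μ (.bwd c A) → BF.sem b ⊆ BF.sem (.neg c) → Der μ (.fwd b (.neg A))
  | negB {b c : BF} {A : CPL0} :
      Der μ (.fwd c A) → BF.sem (.neg c) ⊆ BF.sem b → Der μ (.bwd b (.neg A))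
  | disjF1 {b : BF} {A B : CPL0} :
      Der μ (.fwd b A) → Der μ (.fwd b (.disj A B))
  | disjF2 {b : BF} {A B : CPL0} :
      Der μ (.fwd b B) → Der μ (.fwd b (.disj A B))
  | disjB {b : BF} {A B : CPL0} :
      Der μ (.bwd b A) → Der μ (.bwd b B) → Der μ (.bwd b (.disj A B))
  | conjF {b : BF} {A B : CPL0} :
      Der μ (.fwd b A) → Der μ (.fwd b B) → Der μ (.fwd b (.conj A B))
  | conjB1 {b : BF} {A B : CPL0} :
      Der μ (.bwd b A) → Der μ (.bwd b (.conj A B))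
  | conjB2 {b : BF} {A B : CPL0} :
      Der μ (.bwd b B) → Der μ (.bwd b (.conj A B))
  | muF {b : BF} {A : CPL0} :
      μ (BF.sem b) = 0 → Der μ (.fwd b A)
  | muB {b : BF} {A : CPL0} :
      μ (BF.sem b) = 1 → Der μ (.bwd b A)
  | cntF {b c : BF} {q : I01} {A : CPL0} :
      Der μ (.fwd c A) → qq q ≤ μ (BF.sem c) → Der μ (.fwd b (.cnt q A))
  | cntB {b c : BF} {q : I01} {A : CPL0} :
      Der μ (.bwd c A) → μ (BF.sem c) < qq q → Der μ (.bwd b (.cnt q A))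
  | dntF {b c : BF} {q : I01} {A : CPL0} :
      Der μ (.bwd c A) → μ (BF.sem c) < qq q → Der μ (.fwd b (.dnt q A))
  | dntB {b c : BF} {q : I01} {A : CPL0} :
      Der μ (.fwd c A) → qq q ≤ μ (BF.sem c) → Der μ (.bwd b (.dnt q A))

/-! All the content beyond monotonicity lies in the two `μ`-rules. A Boolean formula denotes a
clopen set, and the uniform measure charges every cylinder, hence every nonempty open set. So a
Boolean formula of measure `0` denotes `∅`, and one of measure `1` denotes the whole space. -/

theorem isOpenPosMeasure_of_measure_cylinder_ne_zero {E : ℕ → Type*}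
    [∀ n, TopologicalSpace (E n)] [∀ n, DiscreteTopology (E n)] [MeasurableSpace (∀ n, E n)]
    {μ : Measure (∀ n, E n)} (hμ : ∀ x n, μ (PiNat.cylinder x n) ≠ 0) : μ.IsOpenPosMeasure where
  open_pos := by
    rintro U hU ⟨x, hx⟩ hU_null
    obtain ⟨_, ⟨y, n, rfl⟩, -, hsub⟩ :=
      (PiNat.isTopologicalBasis_cylinders E).exists_subset_of_mem_open hx hU
    exact hμ y n (measure_mono_null hsub hU_null)

theorem IsCantorMeasure.measure_cylinder {μ : Measure Cantor} (hμ : IsCantorMeasure μ)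
    (x : Cantor) (n : ℕ) : μ (PiNat.cylinder x n) = 2⁻¹ ^ n := by
  simpa only [PiNat.cylinder_eq_pi, Set.pi, Finset.mem_coe, Set.mem_singleton_iff,
    Finset.card_range] using hμ.2 (Finset.range n) x

theorem IsCantorMeasure.isOpenPosMeasure {μ : Measure Cantor} (hμ : IsCantorMeasure μ) :
    μ.IsOpenPosMeasure := by
  refine isOpenPosMeasure_of_measure_cylinder_ne_zero fun x n ↦ ?_
  rw [hμ.measure_cylinder]
  exact pow_ne_zero n (ENNReal.inv_ne_zero.mpr ENNReal.ofNat_ne_top)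

theorem BF.isClopen_sem (b : BF) : IsClopen b.sem := by
  induction b with
  | var i => exact (isClopen_discrete {true}).preimage (continuous_apply i)
  | tt => exact isClopen_univ
  | ff => exact isClopen_empty
  | neg _ ih => exact ih.compl
  | conj _ _ ihb ihc => exact ihb.inter ihc
  | disj _ _ ihb ihc => exact ihb.union ihc

theorem BF.measure_sem_eq_zero_iff (μ : Measure Cantor) [μ.IsOpenPosMeasure] (b : BF) :
    μ b.sem = 0 ↔ b.sem = ∅ :=
  b.isClopen_sem.isOpen.measure_eq_zero_iff μ

theorem BF.measure_sem_eq_one_iff (μ : Measure Cantor) [IsProbabilityMeasure μ]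
    [μ.IsOpenPosMeasure] (b : BF) : μ b.sem = 1 ↔ b.sem = Set.univ :=
  b.isClopen_sem.isClosed.measure_eq_one_iff_eq_univ

namespace CPL0

variable {μ : Measure Cantor} {q : I01} {A : CPL0}

theorem sem_cnt_of_le (h : qq q ≤ μ (A.sem μ)) : (cnt q A).sem μ = Set.univ :=
  if_pos h

theorem sem_cnt_of_lt (h : μ (A.sem μ) < qq q) : (cnt q A).sem μ = ∅ :=
  if_neg h.not_ge

theorem sem_dnt_of_lt (h : μ (A.sem μ) < qq q) : (dnt q A).sem μ = Set.univ :=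
  if_pos h

theorem sem_dnt_of_le (h : qq q ≤ μ (A.sem μ)) : (dnt q A).sem μ = ∅ :=
  if_neg h.not_gt

end CPL0

theorem cpl0_soundness_general (μ : Measure Cantor) [IsProbabilityMeasure μ]
    [μ.IsOpenPosMeasure] (L : LF) (h : Der μ L) : L.valid μ := by
  induction h with
  | ax1 h => exact h
  | ax2 h => exact h
  | runion _ _ h ihc ihd => exact h.trans (Set.union_subset ihc ihd)
  | rinter _ _ h ihc ihd => exact (Set.subset_inter ihc ihd).trans h
  | negF _ h ih => exact h.trans (Set.compl_subset_compl.mpr ih)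
  | negB _ h ih => exact (Set.compl_subset_compl.mpr ih).trans h
  | disjF1 _ ih => exact Set.subset_union_of_subset_left ih _
  | disjF2 _ ih => exact Set.subset_union_of_subset_right ih _
  | disjB _ _ ihA ihB => exact Set.union_subset ihA ihB
  | conjF _ _ ihA ihB => exact Set.subset_inter ihA ihB
  | conjB1 _ ih => exact Set.inter_subset_left.trans ih
  | conjB2 _ ih => exact Set.inter_subset_right.trans ih
  | muF h => exact ((BF.measure_sem_eq_zero_iff μ _).mp h).trans_subset (Set.empty_subset _)
  | muB h => exact (Set.subset_univ _).trans_eq ((BF.measure_sem_eq_one_iff μ _).mp h).symm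
  | cntF _ h ih =>
    exact (Set.subset_univ _).trans_eq (CPL0.sem_cnt_of_le (h.trans (measure_mono ih))).symm
  | cntB _ h ih =>
    exact (CPL0.sem_cnt_of_lt ((measure_mono ih).trans_lt h)).trans_subset (Set.empty_subset _)
  | dntF _ h ih =>
    exact (Set.subset_univ _).trans_eq (CPL0.sem_dnt_of_lt ((measure_mono ih).trans_lt h)).symm
  | dntB _ h ih =>
    exact (CPL0.sem_dnt_of_le (h.trans (measure_mono ih))).trans_subset (Set.empty_subset _)

/-- **Soundness.** If a labelled sequent `⊢ L` is derivable in the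
proof system for CPL₀, then it is valid: if `L = b ↣ A` then `⟦b⟧ ⊆ ⟦A⟧`, and if
`L = b ↢ A` then `⟦A⟧ ⊆ ⟦b⟧`. -/
theorem cpl0_soundness
    (μ : Measure Cantor) (hμ : IsCantorMeasure μ) (L : LF) (h : Der μ L) :
    L.valid μ := by
  have := hμ.1
  have := hμ.isOpenPosMeasure
  exact cpl0_soundness_general μ L h
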